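/- Let n ≥ 1, 1 ≤ j ≤ n, a ∈ ℂⁿ, let φ be a (0,j)-coefficient system on ℂⁿ, and fix k ∈ {1,…,n}. Then Σ'_{|J|=j−1, k∉J} φ_{kJ} · ( Σ_{m∈J} σ^{m(k∪(J∖m))}_{kJ} a_m ) = Σ'_{|J|=j−1, k∈J} Σ_{m=1}^n a_m φ_{mJ}. -/

import Mathlib

open scoped BigOperators
open MeasureTheory

namespace HM

/-- The finset of strictly increasing multi-indices of length `q` with entries in `Fin n`. -/
def Incr (n q : ℕ) : Finset (Fin q → Fin n) :=
  Finset.univ.filter (fun I => ∀ a b : Fin q, a < b → I a < I b)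

/-- Prepend the index `k` to a `(q-1)`-tuple `J`, giving the `q`-tuple `kJ`. -/
def cons' {n : ℕ} (q : ℕ) (k : Fin n) (J : Fin (q - 1) → Fin n) : Fin q → Fin n :=
  fun i => if h : (i : ℕ) = 0 then k else J ⟨(i : ℕ) - 1, by have := i.isLt; omega⟩

/-- A (0,q)-coefficient system: an antisymmetric assignment of complex numbers to q-tuples
(hence vanishing on tuples with a repeated index). -/
def IsCoeff {n q : ℕ} (u : (Fin q → Fin n) → ℂ) : Prop :=
  ∀ (σ : Equiv.Perm (Fin q)) (I : Fin q → Fin n),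
    u (I ∘ σ) = ((Equiv.Perm.sign σ : ℤ) : ℂ) * u I

/-- `|u|²`, the sum of `|u_I|²` over strictly increasing multi-indices `I`. -/
noncomputable def nSq {n q : ℕ} (u : (Fin q → Fin n) → ℂ) : ℝ :=
  ∑ I ∈ Incr n q, ‖u I‖ ^ 2

/-- The Hessian form of a matrix `H` on coefficient systems:
`H(u,v) = Σ'_{|J|=q-1} Σ_{k,l} H_{lk} u_{lJ} conj(v_{kJ})`. -/
noncomputable def mForm {n : ℕ} (q : ℕ) (H : Matrix (Fin n) (Fin n) ℂ)
    (u v : (Fin q → Fin n) → ℂ) : ℂ :=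
  ∑ J ∈ Incr n (q - 1), ∑ k : Fin n, ∑ l : Fin n,
    H l k * u (cons' q l J) * star (v (cons' q k J))

/-- `σ^I_J`: the sign of the permutation rearranging `I` into `J`; `0` if `J` is not a
rearrangement of `I` (in particular `0` if `I` has a repeated entry). -/
def permSign {n p : ℕ} (I J : Fin p → Fin n) : ℤ :=
  if Function.Injective I then
    ∑ π : Equiv.Perm (Fin p), if J = I ∘ π then ((Equiv.Perm.sign π : ℤ)) else 0
  else 0

/-- The Wirtinger derivative `∂f/∂z_k` of a complex-valued function, via real Fréchet
derivatives: `½(∂f/∂x_k − i ∂f/∂y_k)`. -/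
noncomputable def dz {n : ℕ} (f : (Fin n → ℂ) → ℂ) (k : Fin n) (z : Fin n → ℂ) : ℂ :=
  (1/2 : ℂ) * (fderiv ℝ f z (Pi.single k 1) - Complex.I * fderiv ℝ f z (Pi.single k Complex.I))

/-- The Wirtinger derivative `∂f/∂z̄_k`: `½(∂f/∂x_k + i ∂f/∂y_k)`. -/
noncomputable def dzbar {n : ℕ} (f : (Fin n → ℂ) → ℂ) (k : Fin n) (z : Fin n → ℂ) : ℂ :=
  (1/2 : ℂ) * (fderiv ℝ f z (Pi.single k 1) + Complex.I * fderiv ℝ f z (Pi.single k Complex.I))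

/-- The mixed Wirtinger Hessian `∂²f/∂z_l∂z̄_k` of a real-valued function. -/
noncomputable def hessW {n : ℕ} (f : (Fin n → ℂ) → ℝ) (l k : Fin n) (z : Fin n → ℂ) : ℂ :=
  dz (fun w => dzbar (fun y => (f y : ℂ)) k w) l z

/-- The Hessian form `i∂∂̄f(u,u)(z) = Σ'_{|J|=q-1} Σ_{k,l} ∂²f/∂z_l∂z̄_k(z) u_{lJ} conj(u_{kJ})`. -/
noncomputable def hForm {n : ℕ} (q : ℕ) (f : (Fin n → ℂ) → ℝ)
    (u : (Fin q → Fin n) → ℂ) (z : Fin n → ℂ) : ℂ :=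
  ∑ J ∈ Incr n (q - 1), ∑ k : Fin n, ∑ l : Fin n,
    hessW f l k z * u (cons' q l J) * star (u (cons' q k J))

/-- Coefficient of `∂̄u` on the `(q+1)`-tuple `M`:
`(∂̄u)_M = Σ_k Σ'_{|J|=q} σ^{kJ}_M ∂u_J/∂z̄_k`. -/
noncomputable def dbarC {n : ℕ} (q : ℕ) (u : (Fin q → Fin n) → (Fin n → ℂ) → ℂ)
    (M : Fin (q + 1) → Fin n) (z : Fin n → ℂ) : ℂ :=
  ∑ k : Fin n, ∑ J ∈ Incr n q, ((permSign (cons' (q + 1) k J) M : ℤ) : ℂ) * dzbar (u J) k z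

/-- Coefficient of `ϑu` on the `(q-1)`-tuple `J`: `(ϑu)_J = −Σ_l ∂u_{lJ}/∂z_l`. -/
noncomputable def thetaC {n : ℕ} (q : ℕ) (u : (Fin q → Fin n) → (Fin n → ℂ) → ℂ)
    (J : Fin (q - 1) → Fin n) (z : Fin n → ℂ) : ℂ :=
  -∑ l : Fin n, dz (u (cons' q l J)) l z

/-- Pointwise `|∂̄u|²`. -/
noncomputable def dbarSq {n : ℕ} (q : ℕ) (u : (Fin q → Fin n) → (Fin n → ℂ) → ℂ)
    (z : Fin n → ℂ) : ℝ :=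
  ∑ M ∈ Incr n (q + 1), ‖dbarC q u M z‖ ^ 2

/-- Pointwise `|ϑu|²`. -/
noncomputable def thetaSq {n : ℕ} (q : ℕ) (u : (Fin q → Fin n) → (Fin n → ℂ) → ℂ)
    (z : Fin n → ℂ) : ℝ :=
  ∑ J ∈ Incr n (q - 1), ‖thetaC q u J z‖ ^ 2

/-- Remove the `i`-th entry of a `j`-tuple, giving a `(j-1)`-tuple. -/
def removeIdx {n j : ℕ} (I : Fin j → Fin n) (i : Fin j) : Fin (j - 1) → Fin n :=
  fun t => if (t : ℕ) < (i : ℕ) then I ⟨t, by have := t.isLt; omega⟩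
    else I ⟨(t : ℕ) + 1, by have := t.isLt; omega⟩

/-- The increasing `j`-tuple listing a finset `S` (with default `d` out of range). -/
def sortedTuple {n : ℕ} (j : ℕ) (S : Finset (Fin n)) (d : Fin n) : Fin j → Fin n :=
  fun t => (S.sort (· ≤ ·)).getD t d

end HM

namespace HM

theorem sortedTuple_eq {n q : ℕ} (S : Finset (Fin n)) (d : Fin n) (h : S.card = q) :
    sortedTuple q S d = S.orderEmbOfFin h := by
  funext t
  rw [Finset.orderEmbOfFin_apply]
  unfold sortedTuple
  rw [List.getD_eq_getElem]
  rfl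

theorem mem_Incr {n q : ℕ} (J : Fin q → Fin n) : J ∈ Incr n q ↔ StrictMono J := by
  simp only [Incr, Finset.mem_filter, Finset.mem_univ, true_and]
  exact ⟨fun h a b => h a b, fun h a b => @h a b⟩

theorem sorted_mem {n q : ℕ} (S : Finset (Fin n)) (d : Fin n) (h : S.card = q) :
    sortedTuple q S d ∈ Incr n q := by
  rw [mem_Incr, sortedTuple_eq S d h]
  exact (S.orderEmbOfFin h).strictMono

theorem sorted_image {n q : ℕ} (S : Finset (Fin n)) (d : Fin n) (h : S.card = q) :
    Finset.image (sortedTuple q S d) Finset.univ = S := by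
  rw [sortedTuple_eq S d h]
  exact S.image_orderEmbOfFin_univ h

theorem card_image {n q : ℕ} (J : Fin q → Fin n) (hJ : J ∈ Incr n q) :
    (Finset.image J Finset.univ).card = q := by
  rw [mem_Incr] at hJ
  rw [Finset.card_image_of_injective _ hJ.injective]
  simp

theorem sorted_of_image {n q : ℕ} (J : Fin q → Fin n) (hJ : J ∈ Incr n q) (d : Fin n) :
    sortedTuple q (Finset.image J Finset.univ) d = J := by
  rw [sortedTuple_eq _ d (card_image J hJ)]
  symm
  apply Finset.orderEmbOfFin_unique
  · intro x; simp
  · exact (mem_Incr J).1 hJ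

theorem cons'_eq {n q : ℕ} (k : Fin n) (J : Fin q → Fin n) :
    cons' (q + 1) k J = (Fin.cons k J : Fin (q + 1) → Fin n) := by
  funext i
  refine Fin.cases ?_ (fun i => ?_) i
  · simp [cons']
  · simp [cons']

theorem cons_inj {n q : ℕ} (k : Fin n) (J : Fin q → Fin n) (hJ : J ∈ Incr n q)
    (hk : k ∉ Finset.image J Finset.univ) : Function.Injective (cons' (q + 1) k J) := by
  rw [cons'_eq, Fin.cons_injective_iff]
  refine ⟨?_, ((mem_Incr J).1 hJ).injective⟩
  simpa using hk

theorem cons_range {n q : ℕ} (k : Fin n) (J : Fin q → Fin n) :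
    Set.range (cons' (q + 1) k J) = ((insert k (Finset.image J Finset.univ) : Finset (Fin n)) : Set (Fin n)) := by
  rw [cons'_eq, Fin.range_cons]
  simp

theorem permSign_mul {n p : ℕ} (φ : (Fin p → Fin n) → ℂ) (hφ : IsCoeff φ)
    (I J : Fin p → Fin n) (hI : Function.Injective I) (hJ : Function.Injective J)
    (h : Set.range J = Set.range I) : φ J * ((permSign I J : ℤ) : ℂ) = φ I := by
  let π : Equiv.Perm (Fin p) :=
    (Equiv.ofInjective J hJ).trans ((Equiv.setCongr h).trans (Equiv.ofInjective I hI).symm)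
  have hπ : J = I ∘ π := by
    funext x
    simp only [π, Function.comp, Equiv.trans_apply]
    rw [Equiv.apply_ofInjective_symm hI]
    rfl
  have hs : permSign I J = (Equiv.Perm.sign π : ℤ) := by
    unfold permSign
    rw [if_pos hI, Finset.sum_eq_single π]
    · rw [if_pos hπ]
    · intro b _ hb
      rw [if_neg]
      intro hb'
      apply hb
      ext x
      have := congrFun (hb'.symm.trans hπ) x
      exact congrArg Fin.val (hI this)
    · simp
  rw [hs]
  conv_lhs => rw [hπ, hφ π I]
  have : ((Equiv.Perm.sign π : ℤ) : ℂ) * ((Equiv.Perm.sign π : ℤ) : ℂ) = 1 := by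
    rcases Int.units_eq_one_or (Equiv.Perm.sign π) with h | h <;> simp [h]
  linear_combination (φ I) * this

theorem coeff_zero {n p : ℕ} (φ : (Fin p → Fin n) → ℂ) (hφ : IsCoeff φ)
    (I : Fin p → Fin n) (x y : Fin p) (hxy : x ≠ y) (h : I x = I y) : φ I = 0 := by
  have h1 := hφ (Equiv.swap x y) I
  have h2 : I ∘ (Equiv.swap x y) = I := by
    funext z
    simp only [Function.comp]
    rw [Equiv.swap_apply_def]
    split_ifs with h3 h4
    · rw [h3, h]
    · rw [h4, h]
    · rfl
  rw [h2, Equiv.Perm.sign_swap hxy] at h1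
  simp at h1
  linear_combination h1 / 2

theorem main {n q : ℕ} (a : Fin n → ℂ) (φ : (Fin (q + 1) → Fin n) → ℂ) (hφ : IsCoeff φ)
    (k : Fin n) :
    ∑ J ∈ (Incr n q).filter (fun J => ∀ i, J i ≠ k),
        φ (cons' (q + 1) k J) * ∑ i : Fin q,
          ((permSign
              (cons' (q + 1) (J i) (sortedTuple q
                (insert k ((Finset.image J Finset.univ).erase (J i))) k))
              (cons' (q + 1) k J) : ℤ) : ℂ) * a (J i)
      = ∑ J ∈ (Incr n q).filter (fun J => ∃ i, J i = k),
          ∑ m : Fin n, a m * φ (cons' (q + 1) m J) := by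
  have swapCard : ∀ (S : Finset (Fin n)) (x y : Fin n), x ∈ S → y ∉ S → S.card = q →
      (insert y (S.erase x)).card = q := by
    intro S x y hx hy hS
    rw [Finset.card_insert_of_notMem (fun h => hy (Finset.mem_of_mem_erase h)),
      Finset.card_erase_add_one hx, hS]
  have L : ∀ J ∈ (Incr n q).filter (fun J => ∀ i, J i ≠ k),
      φ (cons' (q + 1) k J) * ∑ i : Fin q,
          ((permSign
              (cons' (q + 1) (J i) (sortedTuple q
                (insert k ((Finset.image J Finset.univ).erase (J i))) k))
              (cons' (q + 1) k J) : ℤ) : ℂ) * a (J i)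
      = ∑ m ∈ Finset.image J Finset.univ, a m * φ (cons' (q + 1) m (sortedTuple q
                (insert k ((Finset.image J Finset.univ).erase m)) k)) := by
    intro J hJ
    rw [Finset.mem_filter] at hJ
    obtain ⟨hJ, hk⟩ := hJ
    have hk' : k ∉ Finset.image J Finset.univ := by simpa using hk
    rw [Finset.sum_image (fun x _ y _ h => ((mem_Incr J).1 hJ).injective h), Finset.mul_sum]
    refine Finset.sum_congr rfl fun i _ => ?_
    have hi : J i ∈ Finset.image J Finset.univ := by simp
    have hc := swapCard _ _ _ hi hk' (card_image J hJ)
    have hne : J i ≠ k := hk i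
    rw [← permSign_mul φ hφ (cons' (q + 1) (J i) (sortedTuple q
                (insert k ((Finset.image J Finset.univ).erase (J i))) k))
              (cons' (q + 1) k J) ?_ ?_ ?_]
    · ring
    · apply cons_inj _ _ (sorted_mem _ _ hc)
      rw [sorted_image _ _ hc]
      simp [hne]
    · exact cons_inj _ _ hJ hk'
    · rw [cons_range, cons_range, sorted_image _ _ hc, Finset.insert_comm, Finset.insert_erase hi]
  have R : ∀ J ∈ (Incr n q).filter (fun J => ∃ i, J i = k),
      ∑ m : Fin n, a m * φ (cons' (q + 1) m J)
      = ∑ m ∈ (Finset.image J Finset.univ)ᶜ, a m * φ (cons' (q + 1) m J) := by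
    intro J _
    symm
    apply Finset.sum_subset (Finset.subset_univ _)
    intro m _ hm
    simp only [Finset.mem_compl, not_not, Finset.mem_image, Finset.mem_univ, true_and] at hm
    obtain ⟨i, hi⟩ := hm
    rw [coeff_zero φ hφ _ 0 i.succ (Fin.succ_ne_zero i).symm, mul_zero]
    rw [cons'_eq]
    simp [hi]
  rw [Finset.sum_congr rfl L, Finset.sum_congr rfl R, Finset.sum_sigma', Finset.sum_sigma']
  refine Finset.sum_bij'
    (fun p _ => ⟨sortedTuple q (insert k ((Finset.image p.1 Finset.univ).erase p.2)) k, p.2⟩)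
    (fun p _ => ⟨sortedTuple q (insert p.2 ((Finset.image p.1 Finset.univ).erase k)) k, p.2⟩)
    ?_ ?_ ?_ ?_ ?_
  · rintro ⟨J, m⟩ h
    simp only [Finset.mem_sigma, Finset.mem_filter] at h
    obtain ⟨⟨hJ, hk⟩, hm⟩ := h
    have hk' : k ∉ Finset.image J Finset.univ := by simpa using hk
    have hc := swapCard _ _ _ hm hk' (card_image J hJ)
    have hmk : m ≠ k := fun h => hk' (h ▸ hm)
    have him := sorted_image _ k hc
    simp only [Finset.mem_sigma, Finset.mem_filter, Finset.mem_compl]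
    refine ⟨⟨sorted_mem _ _ hc, ?_⟩, ?_⟩
    · have : k ∈ Finset.image (sortedTuple q (insert k ((Finset.image J Finset.univ).erase m)) k)
        Finset.univ := by rw [him]; simp
      simpa using this
    · rw [him]; simp [hmk]
  · rintro ⟨J, m⟩ h
    simp only [Finset.mem_sigma, Finset.mem_filter, Finset.mem_compl] at h
    obtain ⟨⟨hJ, hk⟩, hm⟩ := h
    have hk' : k ∈ Finset.image J Finset.univ := by simpa using hk
    have hc := swapCard _ _ _ hk' hm (card_image J hJ)
    have hmk : k ≠ m := fun h => hm (h ▸ hk')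
    have him := sorted_image _ k hc
    simp only [Finset.mem_sigma, Finset.mem_filter]
    refine ⟨⟨sorted_mem _ _ hc, ?_⟩, ?_⟩
    · have : k ∉ Finset.image (sortedTuple q (insert m ((Finset.image J Finset.univ).erase k)) k)
        Finset.univ := by rw [him]; simp [hmk]
      simpa using this
    · rw [him]; simp
  · rintro ⟨J, m⟩ h
    simp only [Finset.mem_sigma, Finset.mem_filter] at h
    obtain ⟨⟨hJ, hk⟩, hm⟩ := h
    have hk' : k ∉ Finset.image J Finset.univ := by simpa using hk
    have hc := swapCard _ _ _ hm hk' (card_image J hJ)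
    have him := sorted_image _ k hc
    simp only [him]
    rw [Finset.erase_insert (fun h => hk' (Finset.mem_of_mem_erase h)), Finset.insert_erase hm,
      sorted_of_image J hJ]
  · rintro ⟨J, m⟩ h
    simp only [Finset.mem_sigma, Finset.mem_filter, Finset.mem_compl] at h
    obtain ⟨⟨hJ, hk⟩, hm⟩ := h
    have hk' : k ∈ Finset.image J Finset.univ := by simpa using hk
    have hc := swapCard _ _ _ hk' hm (card_image J hJ)
    have him := sorted_image _ k hc
    simp only [him]
    rw [Finset.erase_insert (fun h => hm (Finset.mem_of_mem_erase h)), Finset.insert_erase hk',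
      sorted_of_image J hJ]
  · rintro ⟨J, m⟩ h
    rfl

end HM

/-- the diagonal error-term computation from Lemma 4.3 (case `k = l`). -/
theorem diagonal_error_term (n j : ℕ) (hn : 1 ≤ n) (hj1 : 1 ≤ j) (hjn : j ≤ n)
    (a : Fin n → ℂ) (φ : (Fin j → Fin n) → ℂ) (hφ : HM.IsCoeff φ) (k : Fin n) :
    ∑ J ∈ (HM.Incr n (j - 1)).filter (fun J => ∀ i, J i ≠ k),
        φ (HM.cons' j k J) * ∑ i : Fin (j - 1),
          ((HM.permSign
              (HM.cons' j (J i) (HM.sortedTuple (j - 1)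
                (insert k ((Finset.image J Finset.univ).erase (J i))) k))
              (HM.cons' j k J) : ℤ) : ℂ) * a (J i)
      = ∑ J ∈ (HM.Incr n (j - 1)).filter (fun J => ∃ i, J i = k),
          ∑ m : Fin n, a m * φ (HM.cons' j m J) := by
  obtain ⟨q, rfl⟩ : ∃ q, j = q + 1 := ⟨j - 1, by omega⟩
  exact HM.main a φ hφ k
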